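/- Let T be a finite tree with at least three vertices. If the domination subdivision number of T equals 3 (i.e., sd(T) = 3), then T is a general corona of a tree. -/

import Mathlib

open SimpleGraph

namespace GenCorona

universe u

/-- A vertex neighborhood partition of a graph `G`: for every vertex `v`, a partition
of the open neighborhood `N_G(v)` into nonempty sets. -/
structure NbhdPartition {V : Type u} (G : SimpleGraph V) where
  part : V → Set (Set V)
  nonempty : ∀ v : V, ∀ A ∈ part v, A.Nonempty
  subset_nbhd : ∀ v : V, ∀ A ∈ part v, A ⊆ G.neighborSet v
  covers : ∀ v : V, ∀ u ∈ G.neighborSet v, ∃ A ∈ part v, u ∈ A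
  eq_of_inter : ∀ v : V, ∀ A ∈ part v, ∀ B ∈ part v, (A ∩ B).Nonempty → A = B

variable {V : Type u}

/-- The vertex type of the general corona `G ∘ 𝒫`: external vertices `(v,1)` are encoded
as `Sum.inl v`, internal vertices `(v,A)` (with `A ∈ 𝒫(v)`) as `Sum.inr ⟨(v,A), _⟩`. -/
abbrev CoronaVert (G : SimpleGraph V) (P : NbhdPartition G) : Type u :=
  V ⊕ {p : V × Set V // p.2 ∈ P.part p.1}

/-- The general corona `G ∘ 𝒫`. -/
def corona (G : SimpleGraph V) (P : NbhdPartition G) : SimpleGraph (CoronaVert G P) :=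
  SimpleGraph.fromRel fun x y =>
    match x, y with
    | Sum.inl v, Sum.inr p => v = p.val.1
    | Sum.inr p, Sum.inr q =>
        G.Adj p.val.1 q.val.1 ∧ q.val.1 ∈ p.val.2 ∧ p.val.1 ∈ q.val.2
    | _, _ => False

/-- The set of external vertices of the general corona. -/
def Ext (G : SimpleGraph V) (P : NbhdPartition G) : Set (CoronaVert G P) :=
  Set.range Sum.inl

/-- A graph is a general corona of a tree if it is isomorphic to `T ∘ 𝒫` for some finite
tree `T` and some vertex neighborhood partition `𝒫` of `T`. -/
def IsGeneralCoronaOfTree {W : Type*} (H : SimpleGraph W) : Prop :=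
  ∃ (n : ℕ) (T : SimpleGraph (Fin n)) (P : NbhdPartition T),
    T.IsTree ∧ Nonempty (H ≃g corona T P)

/-- A graph `H` is a general corona of a tree with external vertex set `E`. -/
def IsGenCoronaWithExt {W : Type*} (H : SimpleGraph W) (E : Set W) : Prop :=
  ∃ (n : ℕ) (T : SimpleGraph (Fin n)) (P : NbhdPartition T),
    T.IsTree ∧ ∃ f : H ≃g corona T P, E = ⇑f ⁻¹' Ext T P

/-- `D` is a dominating set of `G`. -/
def IsDominating (G : SimpleGraph V) (D : Set V) : Prop :=
  ∀ v ∉ D, ∃ u ∈ D, G.Adj v u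

/-- `S` is a 2-packing of `G`: any two distinct vertices of `S` are at distance
greater than 2 (where the extended distance of unreachable vertices is `⊤`). -/
def Is2Packing (G : SimpleGraph V) (S : Set V) : Prop :=
  ∀ u ∈ S, ∀ v ∈ S, u ≠ v → 2 < G.edist u v

/-- A leaf is a vertex of degree 1, i.e. with exactly one neighbor. -/
def IsLeaf (G : SimpleGraph V) (v : V) : Prop :=
  (G.neighborSet v).ncard = 1

/-- The domination number: the minimum size of a dominating set. -/
noncomputable def dominationNumber (G : SimpleGraph V) : ℕ :=
  sInf {n : ℕ | ∃ D : Set V, IsDominating G D ∧ D.ncard = n}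

/-- The graph obtained from `G` by subdividing every edge in `F` (each once):
for each `e ∈ F` a new vertex `Sum.inr e` replaces the edge `e` by a path of length two. -/
def subdivide (G : SimpleGraph V) (F : Set (Sym2 V)) : SimpleGraph (V ⊕ F) :=
  SimpleGraph.fromRel fun x y =>
    match x, y with
    | Sum.inl u, Sum.inl v => G.Adj u v ∧ s(u, v) ∉ F
    | Sum.inl u, Sum.inr e => u ∈ e.val
    | _, _ => False

/-- The domination subdivision number `sd(G)`: the minimum number of edges which must be
subdivided (each edge at most once) in order to increase the domination number. -/
noncomputable def sd (G : SimpleGraph V) : ℕ :=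
  sInf {k : ℕ | ∃ F : Set (Sym2 V), F ⊆ G.edgeSet ∧ F.ncard = k ∧
    dominationNumber G < dominationNumber (subdivide G F)}

/-- The corona `G ∘ K₁`: attach one new pendant vertex `Sum.inr v` to each vertex
`Sum.inl v` of `G`. -/
def coronaK1 (G : SimpleGraph V) : SimpleGraph (V ⊕ V) :=
  SimpleGraph.fromRel fun x y =>
    match x, y with
    | Sum.inl u, Sum.inl w => G.Adj u w
    | Sum.inl u, Sum.inr w => u = w
    | _, _ => False

/-- The 2-subdivision `S₂(G)`: every edge `uv` is replaced by a path `(u, x₁, x₂, v)`;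
the new vertex `Sum.inr ⟨(u,v), _⟩` is the subdivision vertex adjacent to `u`. -/
def twoSubdivision (G : SimpleGraph V) : SimpleGraph (V ⊕ {p : V × V // G.Adj p.1 p.2}) :=
  SimpleGraph.fromRel fun x y =>
    match x, y with
    | Sum.inl u, Sum.inr p => u = p.val.1
    | Sum.inr p, Sum.inr q => p.val.1 = q.val.2 ∧ p.val.2 = q.val.1
    | _, _ => False

/-- `𝒫'` is a refinement of `𝒫`. -/
def Refines {G : SimpleGraph V} (P' P : NbhdPartition G) : Prop :=
  ∀ v : V, ∀ A ∈ P'.part v, ∃ B ∈ P.part v, A ⊆ B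

/-- The graph obtained by contracting the two vertices `x` and `y` of `G` to the single
vertex `x` (the vertex `y` is removed, and `x` becomes adjacent to all former
neighbors of `y`). -/
def contractPair {W : Type*} (G : SimpleGraph W) (x y : W) :
    SimpleGraph {w : W // w ≠ y} :=
  SimpleGraph.fromRel fun a b =>
    G.Adj a.val b.val ∨ (a.val = x ∧ G.Adj y b.val) ∨ (b.val = x ∧ G.Adj a.val y)

/-- The graph obtained from `G` by attaching a path `(x, y, z)` (encoded as
`Sum.inr 0, Sum.inr 1, Sum.inr 2`) to the vertex `v` via the edge `v x`. -/
def attachPath3 {W : Type*} (G : SimpleGraph W) (v : W) : SimpleGraph (W ⊕ Fin 3) :=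
  SimpleGraph.fromRel fun a b =>
    match a, b with
    | Sum.inl u, Sum.inl w => G.Adj u w
    | Sum.inl u, Sum.inr i => u = v ∧ i = 0
    | Sum.inr i, Sum.inr j => (i = 0 ∧ j = 1) ∨ (i = 1 ∧ j = 2)
    | _, _ => False

/-- The graph obtained from `G` by attaching a path `(x, y)` (encoded as
`Sum.inr 0, Sum.inr 1`) to the vertex `v` via the edge `v x`. -/
def attachPath2 {W : Type*} (G : SimpleGraph W) (v : W) : SimpleGraph (W ⊕ Fin 2) :=
  SimpleGraph.fromRel fun a b =>
    match a, b with
    | Sum.inl u, Sum.inl w => G.Adj u w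
    | Sum.inl u, Sum.inr i => u = v ∧ i = 0
    | Sum.inr i, Sum.inr j => i = 0 ∧ j = 1
    | _, _ => False

/-- The family `𝓕` of labeled trees; the label of a vertex is `A` when it belongs to the
distinguished set `L`, and `B` otherwise.  The family contains the labeled path `P₄`
(leaves labeled `A`, support vertices labeled `B`) and is closed under the two
attachment operations. -/
inductive LabF : ∀ {W : Type}, SimpleGraph W → Set W → Prop where
  | base : LabF (SimpleGraph.pathGraph 4) ({0, 3} : Set (Fin 4))
  | opA {W : Type} {G : SimpleGraph W} {L : Set W} (v : W) :
      LabF G L → v ∈ L →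
        LabF (attachPath3 G v) (Sum.inl '' L ∪ {Sum.inr (2 : Fin 3)})
  | opB {W : Type} {G : SimpleGraph W} {L : Set W} (v : W) :
      LabF G L → v ∉ L →
        LabF (attachPath2 G v) (Sum.inl '' L ∪ {Sum.inr (1 : Fin 2)})

/-- A tree `T` belongs to the family `𝓕` if it admits a labeling constructed by the
above rules, i.e. it is isomorphic to a member of the inductively generated family. -/
def MemF {W : Type*} (T : SimpleGraph W) : Prop :=
  ∃ (W' : Type) (G : SimpleGraph W') (L : Set W'), LabF G L ∧ Nonempty (T ≃g G)

/-!
By the theorem of Meir and Moon, a tree has a 2-packing `S` of size `γ`. If some vertex were in no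
closed neighborhood `N[s]`, `s ∈ S`, then connectedness would give a path `s – v – u` with `s ∈ S`
and `u` uncovered, and after subdividing `sv` and `vu` the new vertex on `vu` could be added to `S`,
so that `γ` would increase. Hence `sd > 2` forces every 2-packing of size `γ` to be a perfect code.
If a leaf `l` were not in `S`, its neighbor would be, and exchanging the two would give a 2-packing
of size `γ` that misses the other neighbors; so `S` contains all leaves.

Contracting the closed neighborhoods of the code vertices gives a tree. A vertex `w` outside the
code is not a leaf and determines the set of those other neighborhoods that it is adjacent to;
since a tree has at most one edge between two disjoint connected subsets, these sets form a
partition at each contracted vertex, and the corona of the contracted tree is the original one.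
-/

/-- The closed neighborhood `N[v]`. -/
def closedNbhd (G : SimpleGraph V) (v : V) : Set V :=
  insert v (G.neighborSet v)

section Packing

variable {G : SimpleGraph V} {S D : Set V} {v w x y z : V}

lemma mem_closedNbhd : w ∈ closedNbhd G v ↔ w = v ∨ G.Adj v w :=
  Iff.rfl

lemma self_mem_closedNbhd (G : SimpleGraph V) (v : V) : v ∈ closedNbhd G v :=
  Set.mem_insert v _

lemma mem_closedNbhd_comm : w ∈ closedNbhd G v ↔ v ∈ closedNbhd G w := by
  rw [mem_closedNbhd, mem_closedNbhd, eq_comm, G.adj_comm]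

lemma disjoint_closedNbhd_iff :
    Disjoint (closedNbhd G v) (closedNbhd G w) ↔ 2 < G.edist v w := by
  simp only [two_lt_edist_iff, Set.disjoint_left, mem_closedNbhd, Set.eq_empty_iff_forall_notMem,
    mem_commonNeighbors]
  grind [G.adj_comm v w]

lemma is2Packing_iff_pairwiseDisjoint :
    Is2Packing G S ↔ S.PairwiseDisjoint (closedNbhd G) := by
  simp only [Is2Packing, ← disjoint_closedNbhd_iff]
  rfl

lemma is2Packing_of_forall_mem
    (h : ∀ x ∈ S, ∀ y ∈ S, ∀ z ∈ closedNbhd G x, z ∈ closedNbhd G y → x = y) :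
    Is2Packing G S :=
  is2Packing_iff_pairwiseDisjoint.mpr fun x hx y hy hxy =>
    Set.disjoint_left.mpr fun z hzx hzy => hxy (h x hx y hy z hzx hzy)

lemma Is2Packing.eq_of_mem_closedNbhd (hS : Is2Packing G S) (hx : x ∈ S) (hy : y ∈ S)
    (hzx : z ∈ closedNbhd G x) (hzy : z ∈ closedNbhd G y) : x = y :=
  (is2Packing_iff_pairwiseDisjoint.mp hS).elim_set hx hy z hzx hzy

lemma Is2Packing.insert_of_disjoint (hS : Is2Packing G S)
    (hv : ∀ x ∈ S, Disjoint (closedNbhd G v) (closedNbhd G x)) : Is2Packing G (insert v S) :=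
  is2Packing_iff_pairwiseDisjoint.mpr <|
    (is2Packing_iff_pairwiseDisjoint.mp hS).insert fun x hx _ => hv x hx

lemma Is2Packing.mono (hS : Is2Packing G S) (h : D ⊆ S) : Is2Packing G D :=
  fun x hx y hy => hS x (h hx) y (h hy)

lemma isDominating_iff_forall_exists_mem_closedNbhd :
    IsDominating G D ↔ ∀ v, ∃ d ∈ D, d ∈ closedNbhd G v := by
  refine forall_congr' fun v => ⟨fun h => ?_, ?_⟩
  · by_cases hv : v ∈ D
    · exact ⟨v, hv, self_mem_closedNbhd G v⟩
    · exact (h hv).imp fun d hd => ⟨hd.1, Or.inr hd.2⟩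
  · rintro ⟨d, hd, rfl | hvd⟩ hv
    · exact absurd hd hv
    · exact ⟨d, hd, hvd⟩

lemma exists_isDominating_ncard_eq (G : SimpleGraph V) :
    ∃ D : Set V, IsDominating G D ∧ D.ncard = dominationNumber G :=
  Nat.sInf_mem (s := {n : ℕ | ∃ D : Set V, IsDominating G D ∧ D.ncard = n})
    ⟨_, Set.univ, fun v hv => absurd (Set.mem_univ v) hv, rfl⟩

lemma IsDominating.dominationNumber_le (hD : IsDominating G D) : dominationNumber G ≤ D.ncard :=
  Nat.sInf_le ⟨D, hD, rfl⟩

lemma dominationNumber_pos [Finite V] [Nonempty V] (G : SimpleGraph V) :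
    0 < dominationNumber G := by
  obtain ⟨D, hD, hcard⟩ := exists_isDominating_ncard_eq G
  obtain ⟨d, hd, -⟩ := isDominating_iff_forall_exists_mem_closedNbhd.mp hD (Classical.arbitrary V)
  exact hcard ▸ (Set.ncard_pos D.toFinite).mpr ⟨d, hd⟩

lemma Is2Packing.ncard_le_ncard [Finite V] (hS : Is2Packing G S) (hD : IsDominating G D) :
    S.ncard ≤ D.ncard := by
  choose f hfD hf using isDominating_iff_forall_exists_mem_closedNbhd.mp hD
  refine Set.ncard_le_ncard_of_injOn f (fun x _ => hfD x) fun x hx y hy hxy => ?_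
  exact hS.eq_of_mem_closedNbhd hx hy (hf x) (hxy ▸ hf y)

lemma Is2Packing.ncard_le_dominationNumber [Finite V] (hS : Is2Packing G S) :
    S.ncard ≤ dominationNumber G := by
  obtain ⟨D, hD, hcard⟩ := exists_isDominating_ncard_eq G
  exact hcard ▸ hS.ncard_le_ncard hD

end Packing

section MeirMoon

variable {G : SimpleGraph V}

lemma eq_of_adj_of_dist_eq_dist_add_one (hG : G.IsTree) {r x y z : V} (hyx : G.Adj y x)
    (hzx : G.Adj z x) (hy : G.dist r x = G.dist r y + 1) (hz : G.dist r x = G.dist r z + 1) :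
    y = z := by
  have exists_path : ∀ {y}, G.Adj y x → G.dist r x = G.dist r y + 1 →
      ∃ p : G.Walk r x, p.IsPath ∧ p.penultimate = y := by
    intro y hyx hy
    obtain ⟨q, hq⟩ := hG.connected.exists_walk_length_eq_dist r y
    exact ⟨q.concat hyx, Walk.isPath_of_length_eq_dist _ (by rw [q.length_concat, hq, hy]),
      q.penultimate_concat hyx⟩
  obtain ⟨p, hp, rfl⟩ := exists_path hyx hy
  obtain ⟨q, hq, rfl⟩ := exists_path hzx hz
  rw [(hG.existsUnique_path r x).unique hp hq]

/-- The parent of a vertex `x` in a tree rooted at `r`, with `r` its own parent. -/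
lemma exists_parent (hG : G.IsTree) (r x : V) :
    ∃ p ∈ closedNbhd G x, ∀ y, G.Adj x y → y = p ∨ G.dist r y = G.dist r x + 1 := by
  by_cases h : ∃ p, G.Adj x p ∧ G.dist r x = G.dist r p + 1
  · obtain ⟨p, hxp, hp⟩ := h
    refine ⟨p, Or.inr hxp, fun y hxy => ?_⟩
    exact (hG.dist_eq_dist_add_one_of_adj r hxy).imp_left fun hy =>
      eq_of_adj_of_dist_eq_dist_add_one hG hxy.symm hxp.symm hy hp
  · push Not at h
    exact ⟨x, self_mem_closedNbhd G x, fun y hxy =>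
      Or.inr ((hG.dist_eq_dist_add_one_of_adj r hxy).resolve_left (h y hxy))⟩

lemma exists_mem_closedNbhd_forall_dist_le (hG : G.IsTree) (r x : V) :
    ∃ p ∈ closedNbhd G x, ∀ y, G.dist r y ≤ G.dist r x →
      ¬ Disjoint (closedNbhd G x) (closedNbhd G y) → p ∈ closedNbhd G y := by
  obtain ⟨p, hpx, hp⟩ := exists_parent hG r x
  refine ⟨p, hpx, fun y hle hmeet => ?_⟩
  obtain ⟨z, hzx, hzy⟩ := Set.not_disjoint_iff.mp hmeet
  rw [mem_closedNbhd_comm] at hzy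
  rcases hzx with rfl | hxz
  · rcases hzy with rfl | hzy
    · exact hpx
    · obtain rfl | hlt := hp y hzy
      · exact self_mem_closedNbhd G y
      · omega
  · obtain rfl | hz := hp z hxz
    · exact mem_closedNbhd_comm.mp hzy
    -- Now `z` is a child of `x`, so the only vertex of `N[z]` no deeper than `x` is `x` itself.
    · obtain rfl | hzy := hzy
      · omega
      · obtain ⟨q, -, hq⟩ := exists_parent hG r z
        obtain rfl : x = q := (hq x hxz.symm).resolve_right (by omega)
        obtain rfl : y = x := (hq y hzy).resolve_right (by omega)
        exact hpx

/-- The Meir–Moon theorem, relativized to a finite set `X` of vertices to be dominated so that it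
can be proved by induction on `X`, removing all vertices near a deepest one. -/
lemma exists_is2Packing_dominating_finset (hG : G.IsTree) (X : Finset V) :
    ∃ S D : Finset V, S ⊆ X ∧ Is2Packing G S ∧ (∀ x ∈ X, ∃ d ∈ D, d ∈ closedNbhd G x) ∧
      D.card ≤ S.card := by
  classical
  obtain ⟨r⟩ := hG.connected.nonempty
  induction X using Finset.strongInduction with
  | H X ih =>
    rcases X.eq_empty_or_nonempty with rfl | hX
    · exact ⟨∅, ∅, subset_rfl, by simp [Is2Packing], by simp, le_rfl⟩
    obtain ⟨x, hxX, hdeepest⟩ := X.exists_max_image (G.dist r) hX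
    obtain ⟨p, hpx, hp⟩ := exists_mem_closedNbhd_forall_dist_le hG r x
    obtain ⟨S, D, hSX, hS, hD, hcard⟩ := ih (X.filter fun y => p ∉ closedNbhd G y)
      (Finset.filter_ssubset.mpr ⟨x, hxX, not_not.mpr hpx⟩)
    have hdisj : ∀ y ∈ S, Disjoint (closedNbhd G x) (closedNbhd G y) := by
      intro y hy
      obtain ⟨hyX, hpy⟩ := Finset.mem_filter.mp (hSX hy)
      exact not_not.mp fun hmeet => hpy (hp y (hdeepest y hyX) hmeet)
    have hxS : x ∉ S := fun hx => (Finset.mem_filter.mp (hSX hx)).2 hpx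
    refine ⟨insert x S, insert p D,
      Finset.insert_subset hxX (hSX.trans (Finset.filter_subset _ _)), ?_, fun y hy => ?_, ?_⟩
    · rw [Finset.coe_insert]
      exact hS.insert_of_disjoint hdisj
    · by_cases hpy : p ∈ closedNbhd G y
      · exact ⟨p, Finset.mem_insert_self _ _, hpy⟩
      · obtain ⟨d, hd, hdy⟩ := hD y (Finset.mem_filter.mpr ⟨hy, hpy⟩)
        exact ⟨d, Finset.mem_insert_of_mem hd, hdy⟩
    · rw [Finset.card_insert_of_notMem hxS]
      exact (Finset.card_insert_le _ _).trans (Nat.add_le_add_right hcard 1)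

theorem exists_is2Packing_ncard_eq_dominationNumber [Finite V] (hG : G.IsTree) :
    ∃ S : Set V, Is2Packing G S ∧ S.ncard = dominationNumber G := by
  have := Fintype.ofFinite V
  obtain ⟨S, D, -, hS, hD, hcard⟩ := exists_is2Packing_dominating_finset hG Finset.univ
  refine ⟨S, hS, hS.ncard_le_dominationNumber.antisymm ?_⟩
  have hdom : IsDominating G (D : Set V) :=
    isDominating_iff_forall_exists_mem_closedNbhd.mpr fun v => hD v (Finset.mem_univ v)
  calc dominationNumber G ≤ (D : Set V).ncard := hdom.dominationNumber_le
    _ ≤ (S : Set V).ncard := by simpa only [Set.ncard_coe_finset] using hcard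

end MeirMoon

section Subdivision

variable {G : SimpleGraph V} {F : Set (Sym2 V)} {S : Set V}

@[simp] lemma subdivide_adj_inl_inl {a b : V} :
    (subdivide G F).Adj (Sum.inl a) (Sum.inl b) ↔ G.Adj a b ∧ s(a, b) ∉ F := by
  simp only [subdivide, fromRel_adj, ne_eq, Sum.inl.injEq, G.adj_comm b a, Sym2.eq_swap (a := b),
    or_self, and_iff_right_iff_imp]
  exact fun h => h.1.ne

@[simp] lemma subdivide_adj_inl_inr {a : V} {e : F} :
    (subdivide G F).Adj (Sum.inl a) (Sum.inr e) ↔ a ∈ e.val := by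
  simp [subdivide]

@[simp] lemma subdivide_adj_inr_inl {a : V} {e : F} :
    (subdivide G F).Adj (Sum.inr e) (Sum.inl a) ↔ a ∈ e.val := by
  simp [subdivide]

@[simp] lemma not_subdivide_adj_inr_inr {e f : F} :
    ¬ (subdivide G F).Adj (Sum.inr e) (Sum.inr f) := by
  simp [subdivide]

lemma dominationNumber_subdivide_le (hF : F ⊆ G.edgeSet) (hcard : F.ncard < sd G) :
    dominationNumber (subdivide G F) ≤ dominationNumber G := by
  by_contra! hlt
  exact Nat.notMem_of_lt_sInf hcard ⟨F, hF, rfl, hlt⟩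

lemma Is2Packing.image_inl_subdivide (hS : Is2Packing G S) (hF : F ⊆ G.edgeSet) :
    Is2Packing (subdivide G F) (Sum.inl '' S) := by
  refine is2Packing_of_forall_mem ?_
  rintro _ ⟨x, hx, rfl⟩ _ ⟨y, hy, rfl⟩ (z | e) hzx hzy
  · simp only [mem_closedNbhd, Sum.inl.injEq, subdivide_adj_inl_inl] at hzx hzy
    rw [hS.eq_of_mem_closedNbhd hx hy (hzx.imp_right And.left) (hzy.imp_right And.left)]
  · simp only [mem_closedNbhd, reduceCtorEq, subdivide_adj_inl_inr, false_or] at hzx hzy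
    by_contra hne
    have hxy : x ≠ y := fun h => hne (congrArg Sum.inl h)
    have hadj : G.Adj x y := by
      simpa only [(Sym2.mem_and_mem_iff hxy).mp ⟨hzx, hzy⟩, mem_edgeSet] using hF e.2
    exact hxy (hS.eq_of_mem_closedNbhd hx hy (Or.inr hadj) (self_mem_closedNbhd G y))

lemma Is2Packing.insert_inr_subdivide (hS : Is2Packing G S) (hF : F ⊆ G.edgeSet) (e : F)
    (he : ∀ y ∈ e.val, y ∉ S) (hcut : ∀ x ∈ S, ∀ y ∈ e.val, G.Adj x y → s(x, y) ∈ F) :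
    Is2Packing (subdivide G F) (insert (Sum.inr e) (Sum.inl '' S)) := by
  refine (hS.image_inl_subdivide hF).insert_of_disjoint ?_
  rintro _ ⟨x, hx, rfl⟩
  refine Set.disjoint_left.mpr ?_
  rintro (y | f) hze hzx
  · simp only [mem_closedNbhd, reduceCtorEq, subdivide_adj_inr_inl, false_or, Sum.inl.injEq,
      subdivide_adj_inl_inl] at hze hzx
    rcases hzx with rfl | ⟨hxy, hF⟩
    · exact he y hze hx
    · exact hF (hcut x hx y hze hxy)
  · simp only [mem_closedNbhd, Sum.inr.injEq, not_subdivide_adj_inr_inr, or_false, reduceCtorEq,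
      subdivide_adj_inl_inr, false_or] at hze hzx
    exact he x (hze ▸ hzx) hx

lemma Is2Packing.ncard_lt_dominationNumber_subdivide [Finite V] (hS : Is2Packing G S) {s v u : V}
    (hs : s ∈ S) (hsv : G.Adj s v) (hvu : G.Adj v u) (hu : ∀ x ∈ S, u ∉ closedNbhd G x) :
    S.ncard < dominationNumber (subdivide G {s(s, v), s(v, u)}) := by
  set F : Set (Sym2 V) := {s(s, v), s(v, u)}
  have hF : F ⊆ G.edgeSet := Set.pair_subset hsv hvu
  have huS : u ∉ S := fun h => hu u h (self_mem_closedNbhd G u)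
  have hvS : v ∉ S := fun h => hu v h (Or.inr hvu)
  have hpack := hS.insert_inr_subdivide hF ⟨s(v, u), Or.inr rfl⟩
    (by
      rintro y hy
      obtain rfl | rfl := Sym2.mem_iff.mp hy
      exacts [hvS, huS])
    (by
      intro x hx y hy hxy
      obtain rfl | rfl := Sym2.mem_iff.mp hy
      · rw [hS.eq_of_mem_closedNbhd hx hs (Or.inr hxy) (Or.inr hsv)]
        exact Or.inl rfl
      · exact absurd (Or.inr hxy) (hu x hx))
  have hle := hpack.ncard_le_dominationNumber
  rwa [Set.ncard_insert_of_notMem (by simp),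
    Set.ncard_image_of_injective _ Sum.inl_injective] at hle

end Subdivision

/-- A perfect code (efficient dominating set) of `G`, indexed by `ι`: the closed neighborhoods of
the vertices `c i` partition the vertex set. -/
def IsPerfectCode {ι : Type*} (G : SimpleGraph V) (c : ι → V) : Prop :=
  ∀ w, ∃! i, w ∈ closedNbhd G (c i)

section MaximumPacking

variable {G : SimpleGraph V} {S : Set V} {v w l : V}

lemma Is2Packing.isPerfectCode (hS : Is2Packing G S)
    (hcover : ∀ w, ∃ s ∈ S, w ∈ closedNbhd G s) : IsPerfectCode G ((↑) : S → V) := by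
  intro w
  obtain ⟨s, hs, hw⟩ := hcover w
  exact ⟨⟨s, hs⟩, hw, fun t ht => Subtype.ext (hS.eq_of_mem_closedNbhd t.2 hs ht hw)⟩

lemma exists_adj_mem_notMem (hG : G.Connected) {A : Set V} {a b : V} (ha : a ∈ A) (hb : b ∉ A) :
    ∃ x ∈ A, ∃ y ∉ A, G.Adj x y := by
  obtain ⟨p⟩ := hG a b
  obtain ⟨d, -, hd, hd'⟩ := p.exists_boundary_dart A ha hb
  exact ⟨d.fst, hd, d.snd, hd', d.adj⟩

lemma Is2Packing.isPerfectCode_of_two_lt_sd [Finite V] (hG : G.Connected) (hsd : 2 < sd G)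
    (hS : Is2Packing G S) (hcard : S.ncard = dominationNumber G) :
    IsPerfectCode G ((↑) : S → V) := by
  refine hS.isPerfectCode fun w => ?_
  by_contra! hw
  have := hG.nonempty
  obtain ⟨s₀, hs₀⟩ : S.Nonempty :=
    (Set.ncard_pos S.toFinite).mp (hcard ▸ dominationNumber_pos G)
  obtain ⟨v, ⟨s, hs, hsv⟩, u, hu, hvu⟩ := exists_adj_mem_notMem hG
    (A := {v | ∃ s ∈ S, v ∈ closedNbhd G s}) ⟨s₀, hs₀, self_mem_closedNbhd G s₀⟩
    (b := w) (fun ⟨s, hs, hws⟩ => hw s hs hws)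
  have hu' : ∀ x ∈ S, u ∉ closedNbhd G x := fun x hx hux => hu ⟨x, hx, hux⟩
  have hsv : G.Adj s v := hsv.resolve_left fun hvs => hu' s hs (Or.inr (hvs ▸ hvu))
  have hpair : ({s(s, v), s(v, u)} : Set (Sym2 V)).ncard ≤ 2 := by
    simpa using Set.ncard_insert_le s(s, v) {s(v, u)}
  have hle := dominationNumber_subdivide_le (Set.pair_subset hsv hvu) (hpair.trans_lt hsd)
  have hlt := hS.ncard_lt_dominationNumber_subdivide hs hsv hvu hu'
  omega

/-- Otherwise exchanging `w` for `v` yields a packing of the same size that is no longer a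
perfect code. -/
lemma Is2Packing.closedNbhd_eq_of_subset [Finite V] (hG : G.Connected) (hsd : 2 < sd G)
    (hS : Is2Packing G S) (hcard : S.ncard = dominationNumber G) (hw : w ∈ S)
    (hvw : closedNbhd G v ⊆ closedNbhd G w) : closedNbhd G v = closedNbhd G w := by
  by_cases hvS : v ∈ S
  · rw [hS.eq_of_mem_closedNbhd hvS hw (self_mem_closedNbhd G v) (hvw (self_mem_closedNbhd G v))]
  have hexchange : Is2Packing G (insert v (S \ {w})) :=
    (hS.mono Set.sdiff_subset).insert_of_disjoint fun y hy => Set.disjoint_left.mpr fun z hzv hzy =>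
      hy.2 (hS.eq_of_mem_closedNbhd hy.1 hw hzy (hvw hzv))
  have hcode := hexchange.isPerfectCode_of_two_lt_sd hG hsd
    (by rw [Set.ncard_exchange hvS hw, hcard])
  refine hvw.antisymm fun x hxw => ?_
  obtain ⟨⟨s, rfl | ⟨hs, hsw⟩⟩, hxs, -⟩ := hcode x
  · exact hxs
  · exact absurd (hS.eq_of_mem_closedNbhd hs hw hxs hxw) hsw

lemma IsLeaf.exists_closedNbhd_eq_pair (hl : IsLeaf G l) :
    ∃ w, G.Adj l w ∧ closedNbhd G l = {l, w} := by
  obtain ⟨w, hw⟩ := Set.ncard_eq_one.mp hl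
  exact ⟨w, hw.symm.subset rfl, congrArg (Set.insert l) hw⟩

lemma card_le_two_of_closedNbhd_eq_pair [Finite V] (hG : G.Connected)
    (hv : closedNbhd G v = {v, w}) (hw : closedNbhd G w = {v, w}) : Nat.card V ≤ 2 := by
  have huniv : ({v, w} : Set V) = Set.univ := by
    by_contra hne
    obtain ⟨b, hb⟩ := (Set.ne_univ_iff_exists_notMem _).mp hne
    obtain ⟨x, rfl | rfl, y, hy, hxy⟩ := exists_adj_mem_notMem hG (Set.mem_insert v {w}) hb
    · exact hy (hv ▸ Or.inr hxy)
    · exact hy (hw ▸ Or.inr hxy)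
  rw [← Set.ncard_univ, ← huniv]
  simpa using Set.ncard_insert_le v {w}

lemma Is2Packing.mem_of_isLeaf [Finite V] (hG : G.Connected) (h3 : 3 ≤ Nat.card V)
    (hsd : 2 < sd G) (hS : Is2Packing G S) (hcard : S.ncard = dominationNumber G)
    (hl : IsLeaf G l) : l ∈ S := by
  by_contra hlS
  obtain ⟨w, hlw, hNl⟩ := hl.exists_closedNbhd_eq_pair
  obtain ⟨⟨s, hs⟩, hls, -⟩ := hS.isPerfectCode_of_two_lt_sd hG hsd hcard l
  have hwS : w ∈ S := by
    obtain rfl | rfl : s = l ∨ s = w := hNl.subset (mem_closedNbhd_comm.mp hls)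
    exacts [absurd hs hlS, hs]
  have hsub : closedNbhd G l ⊆ closedNbhd G w :=
    hNl ▸ Set.pair_subset (Or.inr hlw.symm) (self_mem_closedNbhd G w)
  have hNw := hS.closedNbhd_eq_of_subset hG hsd hcard hwS hsub
  have := card_le_two_of_closedNbhd_eq_pair hG hNl (hNw ▸ hNl)
  omega

end MaximumPacking

section Contraction

variable {ι : Type*} {G : SimpleGraph V} {φ : V → ι} {a b a' b' x y : V}

lemma reachable_deleteEdges_of_eq (hφ : ∀ i, (G.induce (φ ⁻¹' {i})).Preconnected)
    (hab : φ a ≠ φ b) (hxy : φ x = φ y) : (G.deleteEdges {s(a, b)}).Reachable x y := by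
  let f : G.induce (φ ⁻¹' {φ y}) →g G.deleteEdges {s(a, b)} :=
    { toFun := Subtype.val
      map_rel' := by
        rintro ⟨u, hu : φ u = φ y⟩ ⟨v, hv : φ v = φ y⟩ (huv : G.Adj u v)
        refine deleteEdges_adj.mpr ⟨huv, fun he => hab ?_⟩
        obtain ⟨rfl, rfl⟩ | ⟨rfl, rfl⟩ := Sym2.eq_iff.mp he
        exacts [hu.trans hv.symm, hv.trans hu.symm] }
  exact (hφ (φ y) ⟨x, hxy⟩ ⟨y, rfl⟩).map f

lemma eq_of_adj_of_adj_of_map_eq (hG : G.IsAcyclic)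
    (hφ : ∀ i, (G.induce (φ ⁻¹' {i})).Preconnected) (hab : G.Adj a b) (hab' : G.Adj a' b')
    (ha : φ a = φ a') (hb : φ b = φ b') (hne : φ a ≠ φ b) : a = a' ∧ b = b' := by
  by_contra hcon
  have hadj : (G.deleteEdges {s(a, b)}).Adj a' b' := by
    refine deleteEdges_adj.mpr ⟨hab', fun he => ?_⟩
    obtain ⟨rfl, rfl⟩ | ⟨rfl, rfl⟩ := Sym2.eq_iff.mp he
    exacts [hcon ⟨rfl, rfl⟩, hne ha]
  refine isAcyclic_iff_forall_adj_isBridge.mp hG hab ?_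
  exact (reachable_deleteEdges_of_eq hφ hne ha).trans
    (hadj.reachable.trans (reachable_deleteEdges_of_eq hφ hne hb.symm))

lemma reachable_map (h : G.Reachable x y) : (G.map φ).Reachable (φ x) (φ y) := by
  obtain ⟨p⟩ := h
  induction p with
  | nil => rfl
  | @cons x y z hxy _ ih =>
    refine Reachable.trans ?_ ih
    by_cases he : φ x = φ y
    · rw [he]
    · exact (map_adj_apply' hxy he).reachable

lemma connected_map (hG : G.Connected) (hφ : Function.Surjective φ) : (G.map φ).Connected := by
  have := hG.nonempty.map φ
  refine Connected.mk fun i j => ?_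
  obtain ⟨x, rfl⟩ := hφ i
  obtain ⟨y, rfl⟩ := hφ j
  exact reachable_map (hG x y)

lemma reachable_deleteEdges_of_reachable_map (hφ : ∀ i, (G.induce (φ ⁻¹' {i})).Preconnected)
    (hab : φ a ≠ φ b) (h : ((G.map φ).deleteEdges {s(φ a, φ b)}).Reachable (φ x) (φ y)) :
    (G.deleteEdges {s(a, b)}).Reachable x y := by
  obtain ⟨p⟩ := h
  have lift : ∀ {i j} (_ : ((G.map φ).deleteEdges {s(φ a, φ b)}).Walk i j) {x y : V},
      φ x = i → φ y = j → (G.deleteEdges {s(a, b)}).Reachable x y := by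
    intro i j p
    induction p with
    | nil => exact fun hx hy => reachable_deleteEdges_of_eq hφ hab (hx.trans hy.symm)
    | cons hik _ ih =>
      intro x y hx hy
      obtain ⟨⟨-, u, v, huv, rfl, rfl⟩, hdel⟩ := deleteEdges_adj.mp hik
      have hadj : (G.deleteEdges {s(a, b)}).Adj u v :=
        deleteEdges_adj.mpr ⟨huv, fun he => hdel (congrArg (Sym2.map φ) he)⟩
      exact (reachable_deleteEdges_of_eq hφ hab hx).trans (hadj.reachable.trans (ih rfl hy))
  exact lift p rfl rfl

lemma isAcyclic_map (hG : G.IsAcyclic) (hφ : ∀ i, (G.induce (φ ⁻¹' {i})).Preconnected) :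
    (G.map φ).IsAcyclic := by
  refine isAcyclic_iff_forall_adj_isBridge.mpr ?_
  rintro _ _ ⟨hne, a, b, hab, rfl, rfl⟩ hreach
  exact isAcyclic_iff_forall_adj_isBridge.mp hG hab
    (reachable_deleteEdges_of_reachable_map hφ hne hreach)

end Contraction

section Corona

variable {ι : Type*} {T : SimpleGraph ι} {P : NbhdPartition T}

@[simp] lemma not_corona_adj_inl_inl {i j : ι} : ¬ (corona T P).Adj (Sum.inl i) (Sum.inl j) := by
  simp [corona]

@[simp] lemma corona_adj_inl_inr {i : ι} {p : {p : ι × Set ι // p.2 ∈ P.part p.1}} :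
    (corona T P).Adj (Sum.inl i) (Sum.inr p) ↔ i = p.val.1 := by
  simp [corona]

@[simp] lemma corona_adj_inr_inr {p q : {p : ι × Set ι // p.2 ∈ P.part p.1}} :
    (corona T P).Adj (Sum.inr p) (Sum.inr q) ↔
      T.Adj p.val.1 q.val.1 ∧ q.val.1 ∈ p.val.2 ∧ p.val.1 ∈ q.val.2 := by
  simp only [corona, fromRel_adj, ne_eq, Sum.inr.injEq]
  refine ⟨?_, fun h => ⟨fun hpq => h.1.ne (by rw [hpq]), Or.inl h⟩⟩
  rintro ⟨-, h | ⟨hadj, hp, hq⟩⟩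
  exacts [h, ⟨hadj.symm, hq, hp⟩]

end Corona

namespace IsPerfectCode

variable {ι : Type*} {G : SimpleGraph V} {c : ι → V} {v w : V} {i j : ι}

lemma comp_equiv {κ : Type*} (h : IsPerfectCode G c) (e : κ ≃ ι) : IsPerfectCode G (c ∘ e) :=
  fun w => e.bijective.existsUnique_iff.mp (h w)

/-- The index of the code vertex whose closed neighborhood contains `w`. -/
noncomputable def cell (h : IsPerfectCode G c) (w : V) : ι :=
  (h w).choose

lemma cell_eq_iff (h : IsPerfectCode G c) : h.cell w = i ↔ w ∈ closedNbhd G (c i) :=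
  ⟨fun hi => hi ▸ (h w).choose_spec.1, fun hw => ((h w).choose_spec.2 i hw).symm⟩

lemma cell_apply (h : IsPerfectCode G c) (i : ι) : h.cell (c i) = i :=
  h.cell_eq_iff.mpr (self_mem_closedNbhd G (c i))

lemma cell_eq_of_adj (h : IsPerfectCode G c) (hw : G.Adj (c i) w) : h.cell w = i :=
  h.cell_eq_iff.mpr (Or.inr hw)

lemma adj_cell (h : IsPerfectCode G c) (hw : w ∉ Set.range c) : G.Adj (c (h.cell w)) w :=
  (h.cell_eq_iff.mp rfl).resolve_left fun hwc => hw ⟨_, hwc.symm⟩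

lemma not_adj (h : IsPerfectCode G c) : ¬ G.Adj (c i) (c j) := fun hij =>
  hij.ne (congrArg c ((h.cell_eq_of_adj hij).symm.trans (h.cell_apply j)))

lemma notMem_range_of_adj (h : IsPerfectCode G c) (hvw : G.Adj v w) (hne : h.cell v ≠ h.cell w) :
    v ∉ Set.range c := by
  rintro ⟨i, rfl⟩
  exact hne ((h.cell_apply i).trans (h.cell_eq_of_adj hvw).symm)

lemma preconnected_induce_cell (h : IsPerfectCode G c) (i : ι) :
    (G.induce (h.cell ⁻¹' {i})).Preconnected := by
  have hcenter : ∀ w, (G.induce (h.cell ⁻¹' {i})).Reachable ⟨c i, h.cell_apply i⟩ w := by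
    rintro ⟨w, hw⟩
    obtain rfl | hadj := h.cell_eq_iff.mp hw
    · rfl
    · exact Adj.reachable (by exact hadj)
  exact fun v w => (hcenter v).symm.trans (hcenter w)

lemma cell_ne_of_adj (h : IsPerfectCode G c) (hG : G.CliqueFree 3) (hvw : G.Adj v w)
    (hv : v ∉ Set.range c) (hw : w ∉ Set.range c) : h.cell v ≠ h.cell w := by
  classical
  exact fun he => hG {c (h.cell v), v, w}
    (is3Clique_triple_iff.mpr ⟨h.adj_cell hv, he ▸ h.adj_cell hw, hvw⟩)

lemma isTree_map_cell (h : IsPerfectCode G c) (hG : G.IsTree) : (G.map h.cell).IsTree :=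
  ⟨connected_map hG.connected fun i => ⟨c i, h.cell_apply i⟩,
    isAcyclic_map hG.isAcyclic h.preconnected_induce_cell⟩

/-- The indices of the closed neighborhoods, other than its own, that `w` has neighbors in. -/
def outerCells (h : IsPerfectCode G c) (w : V) : Set ι :=
  h.cell '' G.neighborSet w \ {h.cell w}

lemma cell_mem_outerCells (h : IsPerfectCode G c) (hvw : G.Adj v w)
    (hne : h.cell v ≠ h.cell w) : h.cell w ∈ h.outerCells v :=
  ⟨⟨w, hvw, rfl⟩, hne.symm⟩

lemma outerCells_nonempty (h : IsPerfectCode G c) (hG : G.CliqueFree 3) (hw : w ∉ Set.range c)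
    (hleaf : ¬ IsLeaf G w) : (h.outerCells w).Nonempty := by
  have hcenter : G.Adj w (c (h.cell w)) := (h.adj_cell hw).symm
  obtain ⟨b, hb, hbc⟩ : ∃ b ∈ G.neighborSet w, b ≠ c (h.cell w) := by
    by_contra! hall
    exact hleaf (Set.ncard_eq_one.mpr ⟨_, Set.eq_singleton_iff_unique_mem.mpr ⟨hcenter, hall⟩⟩)
  have hbrange : b ∉ Set.range c := by
    rintro ⟨i, rfl⟩
    exact hbc (congrArg c (h.cell_eq_of_adj hb.symm).symm)
  exact ⟨_, h.cell_mem_outerCells hb (h.cell_ne_of_adj hG hb hw hbrange)⟩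

lemma eq_of_mem_outerCells (h : IsPerfectCode G c) (hG : G.IsAcyclic)
    (hvw : h.cell v = h.cell w) (hv : j ∈ h.outerCells v) (hw : j ∈ h.outerCells w) : v = w := by
  obtain ⟨⟨a, hva, rfl⟩, hne⟩ := hv
  obtain ⟨⟨b, hwb, hab⟩, -⟩ := hw
  exact (eq_of_adj_of_adj_of_map_eq hG h.preconnected_induce_cell hva hwb hvw hab.symm
    (Ne.symm hne)).1

/-- The neighborhood partition of the contracted graph that recovers `G` as its corona: the classes
at `i` are the sets of outer cells of the neighbors of the code vertex `c i`. -/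
def nbhdPartition (h : IsPerfectCode G c) (hG : G.IsAcyclic)
    (hout : ∀ w ∉ Set.range c, (h.outerCells w).Nonempty) : NbhdPartition (G.map h.cell) where
  part i := {A | ∃ w ∉ Set.range c, h.cell w = i ∧ h.outerCells w = A}
  nonempty := by
    rintro _ _ ⟨w, hw, -, rfl⟩
    exact hout w hw
  subset_nbhd := by
    rintro _ _ ⟨w, -, rfl, rfl⟩ _ ⟨⟨b, hb, rfl⟩, hne⟩
    exact map_adj_apply' hb (Ne.symm hne)
  covers := by
    rintro _ _ ⟨hne, a, b, hab, rfl, rfl⟩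
    exact ⟨_, ⟨a, h.notMem_range_of_adj hab hne, rfl, rfl⟩, h.cell_mem_outerCells hab hne⟩
  eq_of_inter := by
    rintro _ _ ⟨v, -, rfl, rfl⟩ _ ⟨w, -, hvw, rfl⟩ ⟨j, hjv, hjw⟩
    rw [h.eq_of_mem_outerCells hG hvw.symm hjv hjw]

/-- The internal vertex of the corona corresponding to a vertex outside the code. -/
noncomputable def toInternal (h : IsPerfectCode G c) (hG : G.IsAcyclic)
    (hout : ∀ w ∉ Set.range c, (h.outerCells w).Nonempty) (w : ↥(Set.range c)ᶜ) :
    {p : ι × Set ι // p.2 ∈ (h.nbhdPartition hG hout).part p.1} :=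
  ⟨(h.cell w, h.outerCells w), w, w.2, rfl, rfl⟩

lemma toInternal_bijective (h : IsPerfectCode G c) (hG : G.IsAcyclic)
    (hout : ∀ w ∉ Set.range c, (h.outerCells w).Nonempty) :
    Function.Bijective (h.toInternal hG hout) := by
  constructor
  · intro v w hvw
    obtain ⟨hcell, houter⟩ := Prod.mk.inj (congrArg Subtype.val hvw)
    obtain ⟨j, hj⟩ := hout v v.2
    exact Subtype.ext (h.eq_of_mem_outerCells hG hcell hj ((Set.ext_iff.mp houter j).mp hj))
  · rintro ⟨⟨i, A⟩, w, hw, hi, hA⟩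
    exact ⟨⟨w, hw⟩, Subtype.ext (Prod.ext hi hA)⟩

lemma adj_iff_of_notMem_range (h : IsPerfectCode G c) (hG : G.IsAcyclic)
    (hv : v ∉ Set.range c) (hw : w ∉ Set.range c) :
    G.Adj v w ↔ (G.map h.cell).Adj (h.cell v) (h.cell w) ∧
      h.cell w ∈ h.outerCells v ∧ h.cell v ∈ h.outerCells w := by
  constructor
  · intro hvw
    have hne := h.cell_ne_of_adj (hG.cliqueFree le_rfl) hvw hv hw
    exact ⟨map_adj_apply' hvw hne, h.cell_mem_outerCells hvw hne,
      h.cell_mem_outerCells hvw.symm hne.symm⟩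
  · rintro ⟨-, ⟨⟨b, hvb, hb⟩, hne⟩, ⟨a, hwa, ha⟩, -⟩
    obtain ⟨-, rfl⟩ := eq_of_adj_of_adj_of_map_eq hG h.preconnected_induce_cell hvb hwa.symm
      ha.symm hb (hb ▸ Ne.symm hne)
    exact hvb

lemma nonempty_iso_corona (h : IsPerfectCode G c) (hG : G.IsAcyclic)
    (hout : ∀ w ∉ Set.range c, (h.outerCells w).Nonempty) :
    Nonempty (G ≃g corona (G.map h.cell) (h.nbhdPartition hG hout)) := by
  classical
  have hc : Function.Injective c := Function.LeftInverse.injective h.cell_apply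
  let toG : ι ⊕ ↥(Set.range c)ᶜ ≃ V :=
    ((Equiv.ofInjective c hc).sumCongr (Equiv.refl _)).trans (Equiv.Set.sumCompl (Set.range c))
  let toCorona : ι ⊕ ↥(Set.range c)ᶜ ≃ CoronaVert (G.map h.cell) (h.nbhdPartition hG hout) :=
    (Equiv.refl ι).sumCongr (Equiv.ofBijective _ (h.toInternal_bijective hG hout))
  have hmixed : ∀ i (w : ↥(Set.range c)ᶜ), i = h.cell w ↔ G.Adj (c i) w := fun i w =>
    ⟨fun hi => hi ▸ h.adj_cell w.2, fun hw => (h.cell_eq_of_adj hw).symm⟩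
  have hadj : ∀ x y, (corona _ _).Adj (toCorona x) (toCorona y) ↔ G.Adj (toG x) (toG y) := by
    rintro (i | v) (j | w)
    · exact iff_of_false not_corona_adj_inl_inl h.not_adj
    · exact corona_adj_inl_inr.trans (hmixed i w)
    · rw [adj_comm, G.adj_comm]
      exact corona_adj_inl_inr.trans (hmixed j v)
    · exact corona_adj_inr_inr.trans (h.adj_iff_of_notMem_range hG v.2 w.2).symm
  refine ⟨toG.symm.trans toCorona, fun {v w} => ?_⟩
  simpa only [Equiv.trans_apply, Equiv.apply_symm_apply] using hadj (toG.symm v) (toG.symm w)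

theorem isGeneralCoronaOfTree [Finite ι] (h : IsPerfectCode G c) (hG : G.IsTree)
    (hleaf : ∀ w, IsLeaf G w → w ∈ Set.range c) : IsGeneralCoronaOfTree G := by
  let e := (Finite.equivFin ι).symm
  have h' : IsPerfectCode G (c ∘ e) := h.comp_equiv e
  have hout : ∀ w ∉ Set.range (c ∘ e), (h'.outerCells w).Nonempty := fun w hw =>
    h'.outerCells_nonempty (hG.isAcyclic.cliqueFree le_rfl) hw fun hl =>
      hw (e.surjective.range_comp c ▸ hleaf w hl)
  exact ⟨_, _, h'.nbhdPartition hG.isAcyclic hout, h'.isTree_map_cell hG,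
    h'.nonempty_iso_corona hG.isAcyclic hout⟩

end IsPerfectCode

/-- If a finite tree `T` with at least three vertices has domination
subdivision number 3, then `T` is a general corona of a tree. -/
theorem isGeneralCorona_of_sd_eq_three {V : Type u} [Fintype V]
    (T : SimpleGraph V) (hT : T.IsTree) (h3 : 3 ≤ Fintype.card V)
    (h : sd T = 3) : IsGeneralCoronaOfTree T := by
  have hsd : 2 < sd T := h ▸ Nat.lt_succ_self 2
  obtain ⟨S, hS, hcard⟩ := exists_is2Packing_ncard_eq_dominationNumber hT
  have hcode := hS.isPerfectCode_of_two_lt_sd hT.connected hsd hcard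
  refine hcode.isGeneralCoronaOfTree hT fun l hl => ?_
  rw [Subtype.range_coe]
  exact hS.mem_of_isLeaf hT.connected (by rwa [Nat.card_eq_fintype_card]) hsd hcard hl

end GenCorona
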